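/- Let m, n be positive integers and A ∈ M_{n,m}(𝔽_q((z⁻¹))) be non-degenerate. Then for almost all θ ∈ 𝔽_q((z⁻¹))ⁿ with respect to the Haar measure on the locally compact additive group 𝔽_q((z⁻¹))ⁿ, one has the equalities ω(A, θ) = 1/ω̂(Aᵀ) and ω̂(A, θ) = 1/ω(Aᵀ). -/

import Mathlib

/-!
Common setup: the field `𝔽_q((z⁻¹))` of formal power series over a finite field `K` of
cardinality `q`, modeled as the field `FF K` of formal Laurent series in `t = z⁻¹`,
together with its non-Archimedean norm, the embedding of the polynomial ring `𝔽_q[z]`,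
distances to polynomial (vectors), Diophantine exponents, `Bad` sets, continued fractions
and best approximation sequences.
-/

open scoped Classical ENNReal NNReal
open Filter

noncomputable section

set_option linter.unusedSectionVars false

namespace FPSDA

variable (K : Type*) [Field K] [Fintype K]

/-- The field `𝔽_q((z⁻¹))` of formal power series in `z⁻¹` over the finite field `K = 𝔽_q`,
modeled as the field of formal Laurent series in the variable `t = z⁻¹`. -/
def FF : Type _ := LaurentSeries K

instance : Field (FF K) := inferInstanceAs (Field (LaurentSeries K))

variable {K}

/-- The identity map, viewing an element of `𝔽_q((z⁻¹))` as a Laurent series in `t = z⁻¹`. -/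
def toL (x : FF K) : LaurentSeries K := x

@[simp] lemma toL_zero : toL (0 : FF K) = 0 := rfl
@[simp] lemma toL_add (x y : FF K) : toL (x + y) = toL x + toL y := rfl
@[simp] lemma toL_neg (x : FF K) : toL (-x) = -toL x := rfl
@[simp] lemma toL_sub (x y : FF K) : toL (x - y) = toL x - toL y := rfl
lemma toL_eq_zero {x : FF K} : toL x = 0 ↔ x = 0 := Iff.rfl

/-- The norm `‖x‖ = q ^ (deg x)` on `𝔽_q((z⁻¹))`, where
`deg x = - (order of x as a Laurent series in z⁻¹)`; `‖0‖ = 0`. -/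
def fnorm (x : FF K) : ℝ :=
  if toL x = 0 then 0 else (Fintype.card K : ℝ) ^ (-(toL x).order)

lemma one_le_q : (1 : ℝ) ≤ (Fintype.card K : ℝ) := by
  exact_mod_cast Fintype.card_pos

lemma fnorm_nonneg (x : FF K) : 0 ≤ fnorm x := by
  unfold fnorm
  split_ifs
  · exact le_refl 0
  · exact zpow_nonneg (by positivity) _

lemma fnorm_eq_zero {x : FF K} : fnorm x = 0 ↔ x = 0 := by
  unfold fnorm
  split_ifs with h
  · exact ⟨fun _ => toL_eq_zero.mp h, fun _ => rfl⟩
  · constructor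
    · intro hc
      exact absurd hc (zpow_ne_zero _ (by
        have h0 : (0:ℝ) < (Fintype.card K : ℝ) := by positivity
        exact ne_of_gt h0))
    · intro hc
      exact absurd (toL_eq_zero.mpr hc) h

lemma fnorm_neg (x : FF K) : fnorm (-x) = fnorm x := by
  unfold fnorm
  rw [toL_neg]
  simp [neg_eq_zero, HahnSeries.order_neg]

lemma fnorm_add_le (x y : FF K) : fnorm (x + y) ≤ max (fnorm x) (fnorm y) := by
  by_cases hxy : x + y = 0
  · rw [fnorm_eq_zero.mpr hxy]
    exact le_max_of_le_left (fnorm_nonneg x)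
  by_cases hx : x = 0
  · rw [hx, zero_add]
    exact le_max_right _ _
  by_cases hy : y = 0
  · rw [hy, add_zero]
    exact le_max_left _ _
  have horder : min (toL x).order (toL y).order ≤ (toL (x + y)).order := by
    rw [toL_add]
    exact HahnSeries.min_order_le_order_add (show toL x + toL y ≠ 0 from hxy)
  have h1 : fnorm (x + y) = (Fintype.card K : ℝ) ^ (-(toL (x+y)).order) := by
    unfold fnorm
    rw [if_neg (show toL (x + y) ≠ 0 from hxy)]
  rcases le_total (toL x).order (toL y).order with h | h
  · have h2 : (toL x).order ≤ (toL (x+y)).order := le_trans (by simp [min_eq_left h]) horder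
    refine le_max_of_le_left ?_
    rw [h1]
    unfold fnorm
    rw [if_neg (show toL x ≠ 0 from hx)]
    exact zpow_le_zpow_right₀ one_le_q (by omega)
  · have h2 : (toL y).order ≤ (toL (x+y)).order := le_trans (by simp [min_eq_right h]) horder
    refine le_max_of_le_right ?_
    rw [h1]
    unfold fnorm
    rw [if_neg (show toL y ≠ 0 from hy)]
    exact zpow_le_zpow_right₀ one_le_q (by omega)

/-- The (ultra)metric `dist x y = ‖x - y‖` on `𝔽_q((z⁻¹))`. -/
instance : MetricSpace (FF K) where
  dist x y := fnorm (x - y)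
  dist_self x := by
    show fnorm (x - x) = 0
    rw [sub_self]
    exact fnorm_eq_zero.mpr rfl
  dist_comm x y := by
    show fnorm (x - y) = fnorm (y - x)
    have h : x - y = -(y - x) := by ring
    rw [h, fnorm_neg]
  dist_triangle x y z := by
    show fnorm (x - z) ≤ fnorm (x - y) + fnorm (y - z)
    have h : x - z = (x - y) + (y - z) := by ring
    calc fnorm (x - z) ≤ max (fnorm (x - y)) (fnorm (y - z)) := by
          rw [h]; exact fnorm_add_le _ _
      _ ≤ fnorm (x - y) + fnorm (y - z) :=
        max_le (le_add_of_nonneg_right (fnorm_nonneg _)) (le_add_of_nonneg_left (fnorm_nonneg _))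
  eq_of_dist_eq_zero := by
    intro x y h
    have h' : x - y = 0 := fnorm_eq_zero.mp h
    exact sub_eq_zero.mp h'

instance : MeasurableSpace (FF K) := borel _
instance : BorelSpace (FF K) := ⟨rfl⟩

/-- The canonical embedding of the polynomial ring `𝔽_q[z]` into `𝔽_q((z⁻¹))`:
the variable `z` is sent to `t⁻¹ = single (-1) 1`. -/
def polyF (P : Polynomial K) : FF K :=
  Polynomial.aeval (HahnSeries.single (-1 : ℤ) (1 : K)) P

/-- Supremum norm of a vector with entries in `𝔽_q((z⁻¹))`. -/
def vnorm {ι : Type*} [Fintype ι] (v : ι → FF K) : ℝ := ⨆ i, fnorm (v i)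

/-- `⟨v⟩`, the distance from the vector `v` to the nearest polynomial vector. -/
def vdist {ι : Type*} [Fintype ι] (v : ι → FF K) : ℝ :=
  ⨅ y : ι → Polynomial K, vnorm (fun i => v i - polyF (y i))

/-- `⟨x⟩`, the distance from the scalar `x` to the nearest polynomial. -/
def sdist (x : FF K) : ℝ := ⨅ y : Polynomial K, fnorm (x - polyF y)

/-- The fractional part `{x} = Σ_{i ≥ 1} a_i z^{-i}` of `x = Σ_i a_i z^{-i}`. -/
def fracPart (x : FF K) : FF K :=
  (⟨fun i => if 1 ≤ i then (toL x).coeff i else 0, (toL x).isPWO_support'.mono (by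
      intro i hi
      by_cases h : (1:ℤ) ≤ i
      · simpa [Function.mem_support, h] using hi
      · simp [Function.mem_support, h] at hi)⟩ : LaurentSeries K)

/-- The integer part `[x] = Σ_{i ≤ 0} a_i z^{-i}` of `x = Σ_i a_i z^{-i}`, as a polynomial
in `z`. -/
def intPoly (x : FF K) : Polynomial K :=
  ∑ i ∈ Finset.range ((-(toL x).order).toNat + 1),
    Polynomial.monomial i ((toL x).coeff (-(i : ℤ)))

/-- `x ∈ 𝔽_q((z⁻¹))` is irrational if it is not in `𝔽_q(z)`, i.e. is not a ratio of two
polynomials in `z`. -/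
def FIrrational (x : FF K) : Prop :=
  ∀ P Q : Polynomial K, Q ≠ 0 → x * polyF Q ≠ polyF P

section Exponents

variable {m n : ℕ}

/-- The norm `‖x‖ = max_j ‖x_j‖` of a polynomial vector `x`. -/
def pnorm {ι : Type*} [Fintype ι] (x : ι → Polynomial K) : ℝ :=
  vnorm (fun i => (polyF (x i) : FF K))

/-- The system `⟨A x - θ⟩ ≤ H^{-ω}`, `‖x‖ ≤ H` has a polynomial solution `x`. -/
def Solv (A : Matrix (Fin n) (Fin m) (FF K)) (θ : Fin n → FF K) (ω H : ℝ) : Prop :=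
  ∃ x : Fin m → Polynomial K,
    vdist (A.mulVec (fun j => polyF (x j)) - θ) ≤ H ^ (-ω) ∧ pnorm x ≤ H

/-- The system `⟨A x⟩ ≤ H^{-ω}`, `‖x‖ ≤ H` has a nonzero polynomial solution `x`. -/
def SolvHom (A : Matrix (Fin n) (Fin m) (FF K)) (ω H : ℝ) : Prop :=
  ∃ x : Fin m → Polynomial K, x ≠ 0 ∧
    vdist (A.mulVec (fun j => polyF (x j))) ≤ H ^ (-ω) ∧ pnorm x ≤ H

/-- The inhomogeneous exponent `ω(A, θ)`: the supremum (in `[0,∞]`) of all `ω` such that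
for arbitrarily large `H` the system `⟨A x - θ⟩ ≤ H^{-ω}`, `‖x‖ ≤ H` has a polynomial
solution. -/
def omegaInhom (A : Matrix (Fin n) (Fin m) (FF K)) (θ : Fin n → FF K) : ℝ≥0∞ :=
  ⨆ (ω : ℝ) (_ : ∀ H₀ : ℝ, ∃ H : ℝ, H₀ ≤ H ∧ Solv A θ ω H), ENNReal.ofReal ω

/-- The uniform inhomogeneous exponent `ω̂(A, θ)`: as `ω(A, θ)`, but with a solution for
all sufficiently large `H`. -/
def omegaHatInhom (A : Matrix (Fin n) (Fin m) (FF K)) (θ : Fin n → FF K) : ℝ≥0∞ :=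
  ⨆ (ω : ℝ) (_ : ∃ H₀ : ℝ, ∀ H : ℝ, H₀ ≤ H → Solv A θ ω H), ENNReal.ofReal ω

/-- The homogeneous exponent `ω(A)`. -/
def omegaHom (A : Matrix (Fin n) (Fin m) (FF K)) : ℝ≥0∞ :=
  ⨆ (ω : ℝ) (_ : ∀ H₀ : ℝ, ∃ H : ℝ, H₀ ≤ H ∧ SolvHom A ω H), ENNReal.ofReal ω

/-- The uniform homogeneous exponent `ω̂(A)`. -/
def omegaHatHom (A : Matrix (Fin n) (Fin m) (FF K)) : ℝ≥0∞ :=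
  ⨆ (ω : ℝ) (_ : ∃ H₀ : ℝ, ∀ H : ℝ, H₀ ≤ H → SolvHom A ω H), ENNReal.ofReal ω

/-- `A` is non-degenerate: the `𝔽_q[z]`-module `Aᵀ 𝔽_q[z]ⁿ + 𝔽_q[z]^m ⊆ 𝔽_q((z⁻¹))^m` has
rank `m + n` over `𝔽_q[z]`, i.e. its `m + n` natural generators are linearly independent
over `𝔽_q[z]`; equivalently, no nonzero polynomial vector `u` makes `Aᵀ u` a polynomial
vector. -/
def Nondegenerate (A : Matrix (Fin n) (Fin m) (FF K)) : Prop :=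
  ∀ u : Fin n → Polynomial K,
    (∃ v : Fin m → Polynomial K,
      A.transpose.mulVec (fun i => polyF (u i)) = fun j => polyF (v j)) → u = 0

/-- `liminf_{x ∈ 𝔽_q[z]^m, ‖x‖ → ∞} ‖x‖^{m/n} ⟨A x - θ⟩`, computed in `[0, ∞]`. -/
def badLiminf (A : Matrix (Fin n) (Fin m) (FF K)) (θ : Fin n → FF K) : ℝ≥0∞ :=
  Filter.liminf
    (fun x : Fin m → Polynomial K =>
      ENNReal.ofReal ((pnorm x) ^ ((m : ℝ) / (n : ℝ)) *
        vdist (A.mulVec (fun j => polyF (x j)) - θ)))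
    (Filter.comap (fun x : Fin m → Polynomial K => pnorm x) Filter.atTop)

/-- The set `Bad^ε(A)` of `θ` in the unit polydisc `𝕀ⁿ` with
`liminf_{‖x‖ → ∞} ‖x‖^{m/n} ⟨A x - θ⟩ ≥ ε`. -/
def Bad (A : Matrix (Fin n) (Fin m) (FF K)) (ε : ℝ) : Set (Fin n → FF K) :=
  {θ | (∀ i, fnorm (θ i) < 1) ∧ ENNReal.ofReal ε ≤ badLiminf A θ}

/-- The set `Bad(A) = ⋃_{ε > 0} Bad^ε(A)`. -/
def BadAll (A : Matrix (Fin n) (Fin m) (FF K)) : Set (Fin n → FF K) :=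
  ⋃ (ε : ℝ) (_ : 0 < ε), Bad A ε

/-- `M(y) = ⟨Aᵀ y⟩` for a polynomial vector `y`. -/
def Mfun (A : Matrix (Fin n) (Fin m) (FF K)) (y : Fin n → Polynomial K) : ℝ :=
  vdist (A.transpose.mulVec (fun i => polyF (y i)))

/-- `y 1, y 2, …` is a sequence of best approximations related to `Aᵀ`:
`1 = Y_1 < Y_2 < ⋯`, `M_1 > M_2 > ⋯`, and `M(x) ≥ M_k` for every nonzero polynomial
vector `x` with `‖x‖ < Y_{k+1}` (the value `y 0` is irrelevant). -/
def IsBestApproxSeq (A : Matrix (Fin n) (Fin m) (FF K))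
    (y : ℕ → Fin n → Polynomial K) : Prop :=
  pnorm (y 1) = 1 ∧
  (∀ k, 1 ≤ k → pnorm (y k) < pnorm (y (k + 1))) ∧
  (∀ k, 1 ≤ k → Mfun A (y (k + 1)) < Mfun A (y k)) ∧
  (∀ k, 1 ≤ k → ∀ x : Fin n → Polynomial K, x ≠ 0 → pnorm x < pnorm (y (k + 1)) →
    Mfun A (y k) ≤ Mfun A x)

end Exponents

section Scalar

/-- The system `⟨ξ x - θ⟩ ≤ H^{-ω}`, `‖x‖ ≤ H` has a polynomial solution `x`. -/
def sSolv (ξ θ : FF K) (ω H : ℝ) : Prop :=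
  ∃ x : Polynomial K, sdist (ξ * polyF x - θ) ≤ H ^ (-ω) ∧ fnorm (polyF x) ≤ H

/-- The scalar inhomogeneous exponent `ω((ξ), θ)`. -/
def somegaInhom (ξ θ : FF K) : ℝ≥0∞ :=
  ⨆ (ω : ℝ) (_ : ∀ H₀ : ℝ, ∃ H : ℝ, H₀ ≤ H ∧ sSolv ξ θ ω H), ENNReal.ofReal ω

/-- The scalar uniform inhomogeneous exponent `ω̂((ξ), θ)`. -/
def somegaHatInhom (ξ θ : FF K) : ℝ≥0∞ :=
  ⨆ (ω : ℝ) (_ : ∃ H₀ : ℝ, ∀ H : ℝ, H₀ ≤ H → sSolv ξ θ ω H), ENNReal.ofReal ω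

/-- The scalar homogeneous exponent `ω((ξ))`. -/
def somegaHom (ξ : FF K) : ℝ≥0∞ :=
  ⨆ (ω : ℝ) (_ : ∀ H₀ : ℝ, ∃ H : ℝ, H₀ ≤ H ∧ ∃ x : Polynomial K, x ≠ 0 ∧
      sdist (ξ * polyF x) ≤ H ^ (-ω) ∧ fnorm (polyF x) ≤ H), ENNReal.ofReal ω

/-- `liminf_{x ∈ 𝔽_q[z], ‖x‖ → ∞} ‖x‖ ⟨α x - θ⟩`, computed in `[0, ∞]`. -/
def sBadLiminf (α θ : FF K) : ℝ≥0∞ :=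
  Filter.liminf
    (fun x : Polynomial K => ENNReal.ofReal (fnorm (polyF x) * sdist (α * polyF x - θ)))
    (Filter.comap (fun x : Polynomial K => fnorm (polyF x)) Filter.atTop)

/-- The set `Bad^ε(α)` of `θ ∈ 𝕀` with `liminf_{‖x‖ → ∞} ‖x‖ ⟨α x - θ⟩ ≥ ε`. -/
def sBad (α : FF K) (ε : ℝ) : Set (FF K) :=
  {θ | fnorm θ < 1 ∧ ENNReal.ofReal ε ≤ sBadLiminf α θ}

end Scalar

section CF

/-- The Gauss map `T x = 1/x - [1/x]` on `𝔽_q((z⁻¹))`. -/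
def gaussMap (x : FF K) : FF K := fracPart x⁻¹

/-- `pquot α k` is the `(k+1)`-st partial quotient `A_{k+1} = [1 / T^k α]` of the
continued fraction expansion of `α`. -/
def pquot (α : FF K) (k : ℕ) : Polynomial K := intPoly ((gaussMap^[k] α)⁻¹)

/-- `cfQ α k` is the denominator `Q_k` of the `k`-th convergent of the continued fraction
expansion of `α`: `Q_0 = 1`, `Q_1 = A_1`, `Q_{k+2} = A_{k+2} Q_{k+1} + Q_k`. -/
def cfQ (α : FF K) : ℕ → Polynomial K
  | 0 => 1
  | 1 => pquot α 0
  | (k + 2) => pquot α (k + 1) * cfQ α (k + 1) + cfQ α k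

/-- `α` is singular on average: for every `c > 0` the proportion of `l ∈ {1, …, N}` for
which `‖{Q α}‖ ≤ c 2^{-l}` has a solution `Q ∈ 𝔽_q[z]` with `0 < ‖Q‖ ≤ 2^l` tends to `1`
as `N → ∞`. -/
def SingularOnAverage (α : FF K) : Prop :=
  ∀ c : ℝ, 0 < c →
    Filter.Tendsto
      (fun N : ℕ =>
        (((Finset.Icc 1 N).filter (fun l : ℕ =>
            ∃ Q : Polynomial K, Q ≠ 0 ∧ fnorm (polyF Q) ≤ 2 ^ l ∧
              fnorm (fracPart (polyF Q * α)) ≤ c / 2 ^ l)).card : ℝ) / (N : ℝ))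
      Filter.atTop (nhds 1)

end CF

end FPSDA

open FPSDA MeasureTheory


namespace FPSDA

section Helpers

variable {K : Type*} [Field K] [Fintype K]

abbrev qq (K : Type*) [Fintype K] : ℝ := (Fintype.card K : ℝ)

lemma one_lt_qq : (1 : ℝ) < qq K := by
  have : 1 < Fintype.card K := Fintype.one_lt_card
  exact_mod_cast this

lemma qq_pos : (0 : ℝ) < qq K := lt_trans one_pos one_lt_qq

/-- coefficient of `z^{-k}` -/
def cf (k : ℤ) : FF K →+ K where
  toFun x := (toL x).coeff k
  map_zero' := by simp
  map_add' x y := by simp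

lemma cf_apply (k : ℤ) (x : FF K) : cf k x = (toL x).coeff k := rfl

lemma fnorm_of_ne {x : FF K} (h : x ≠ 0) : fnorm x = qq K ^ (-(toL x).order) := by
  unfold fnorm
  rw [if_neg (show toL x ≠ 0 from h)]

lemma cf_of_fnorm_lt {x : FF K} {k : ℤ} (h : fnorm x < qq K ^ (-k)) (j : ℤ) (hj : j ≤ k) :
    cf j x = 0 := by
  by_cases hx : x = 0
  · rw [hx, map_zero]
  rw [fnorm_of_ne hx] at h
  have := (zpow_lt_zpow_iff_right₀ (one_lt_qq (K := K))).1 h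
  exact HahnSeries.coeff_eq_zero_of_lt_order (by omega)

lemma fnorm_le_of_cf {x : FF K} {k : ℤ} (h : ∀ j < k, cf j x = 0) :
    fnorm x ≤ qq K ^ (-k) := by
  by_cases hx : x = 0
  · rw [fnorm_eq_zero.2 hx]; exact zpow_nonneg qq_pos.le _
  rw [fnorm_of_ne hx]
  refine zpow_le_zpow_right₀ one_lt_qq.le ?_
  by_contra hc
  have := h (toL x).order (by omega)
  exact hx (HahnSeries.coeff_order_eq_zero.1 this)

lemma fnorm_mul (x y : FF K) : fnorm (x * y) = fnorm x * fnorm y := by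
  by_cases hx : x = 0
  · rw [hx, zero_mul, fnorm_eq_zero.2 rfl, zero_mul]
  by_cases hy : y = 0
  · rw [hy, mul_zero, fnorm_eq_zero.2 rfl, mul_zero]
  rw [fnorm_of_ne hx, fnorm_of_ne hy, fnorm_of_ne (mul_ne_zero hx hy), ← zpow_add₀ qq_pos.ne']
  have : (toL (x * y)).order = (toL x).order + (toL y).order :=
    HahnSeries.order_mul (x := toL x) (y := toL y) hx hy
  rw [this]; congr 1; ring

lemma fnorm_sum_le {ι : Type*} (s : Finset ι) (f : ι → FF K) {r : ℝ} (hr : 0 ≤ r)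
    (h : ∀ i ∈ s, fnorm (f i) ≤ r) : fnorm (∑ i ∈ s, f i) ≤ r := by
  refine Finset.sum_induction f (fun x => fnorm x ≤ r) ?_ ?_ h
  · intro a b ha hb; exact (fnorm_add_le a b).trans (max_le ha hb)
  · rw [fnorm_eq_zero.2 rfl]; exact hr

lemma polyF_add (P Q : Polynomial K) : polyF (P + Q) = polyF P + polyF Q :=
  map_add (Polynomial.aeval (HahnSeries.single (-1 : ℤ) (1 : K))) P Q
lemma polyF_sub (P Q : Polynomial K) : polyF (P - Q) = polyF P - polyF Q :=
  map_sub (Polynomial.aeval (HahnSeries.single (-1 : ℤ) (1 : K))) P Q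
lemma polyF_mul (P Q : Polynomial K) : polyF (P * Q) = polyF P * polyF Q :=
  map_mul (Polynomial.aeval (HahnSeries.single (-1 : ℤ) (1 : K))) P Q
lemma polyF_zero : polyF (0 : Polynomial K) = 0 :=
  map_zero (Polynomial.aeval (HahnSeries.single (-1 : ℤ) (1 : K)))
lemma polyF_sum {ι : Type*} (s : Finset ι) (f : ι → Polynomial K) :
    polyF (∑ i ∈ s, f i) = ∑ i ∈ s, polyF (f i) :=
  map_sum (Polynomial.aeval (HahnSeries.single (-1 : ℤ) (1 : K))) f s

lemma polyF_monomial (n : ℕ) (a : K) :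
    toL (polyF (Polynomial.monomial n a)) = HahnSeries.single (-(n : ℤ)) a := by
  show Polynomial.aeval (HahnSeries.single (-1 : ℤ) (1 : K)) _ = _
  have h : algebraMap K (HahnSeries ℤ K) a = HahnSeries.single (0 : ℤ) a := by
    simp [HahnSeries.algebraMap_apply']
  rw [Polynomial.aeval_monomial, HahnSeries.single_pow]
  refine (congrArg (· * _) h).trans ?_
  rw [HahnSeries.single_mul_single]
  simp

lemma cf_monomial_mul (k : ℤ) (n : ℕ) (a : K) (f : FF K) :
    cf k (polyF (Polynomial.monomial n a) * f) = a * cf (k + n) f := by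
  show (toL (polyF (Polynomial.monomial n a)) * toL f).coeff k = a * (toL f).coeff (k + n)
  rw [polyF_monomial, HahnSeries.coeff_single_mul]
  simp

lemma cf_poly_mul (k : ℤ) (P : Polynomial K) (N : ℕ) (hN : P.natDegree < N) (f : FF K) :
    cf k (polyF P * f) = ∑ l ∈ Finset.range N, P.coeff l * cf (k + l) f := by
  conv_lhs => rw [P.as_sum_range' N hN]
  rw [polyF_sum, Finset.sum_mul, map_sum]
  exact Finset.sum_congr rfl fun l _ => cf_monomial_mul _ _ _ _

lemma cf_one (k : ℤ) : cf k (1 : FF K) = if k = 0 then 1 else 0 := by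
  show (1 : LaurentSeries K).coeff k = _
  rw [HahnSeries.coeff_one]
  congr

lemma cf_polyF_pos (P : Polynomial K) (k : ℤ) (hk : 0 < k) : cf k (polyF P) = 0 := by
  rw [← mul_one (polyF P), cf_poly_mul k P _ (Nat.lt_succ_self _)]
  refine Finset.sum_eq_zero fun l _ => ?_
  rw [cf_one, if_neg (by omega), mul_zero]

lemma cf_polyF_neg (P : Polynomial K) (n : ℕ) : cf (-(n : ℤ)) (polyF P) = P.coeff n := by
  rw [← mul_one (polyF P), cf_poly_mul _ P (P.natDegree + n + 1) (by omega)]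
  rw [Finset.sum_eq_single n]
  · simp [cf_one]
  · intro l _ hl
    rw [cf_one, if_neg (by omega), mul_zero]
  · intro h; simp at h

lemma polyF_ne_zero {P : Polynomial K} (h : P ≠ 0) : polyF P ≠ 0 := by
  intro h0
  apply h
  ext n
  rw [← cf_polyF_neg, h0, map_zero, Polynomial.coeff_zero]

lemma one_le_fnorm_polyF {P : Polynomial K} (h : P ≠ 0) : 1 ≤ fnorm (polyF P) := by
  by_contra hc
  push Not at hc
  have h2 : fnorm (polyF P) < qq K ^ (-(0 : ℤ)) := by simpa using hc
  apply h
  ext n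
  rw [← cf_polyF_neg, cf_of_fnorm_lt h2 _ (by omega), Polynomial.coeff_zero]

lemma fnorm_polyF_le {P : Polynomial K} {b : ℕ} (h : P.natDegree ≤ b) :
    fnorm (polyF P) ≤ qq K ^ b := by
  have : fnorm (polyF P) ≤ qq K ^ (-(-(b : ℤ))) := by
    refine fnorm_le_of_cf fun j hj => ?_
    obtain ⟨n, rfl⟩ : ∃ n : ℕ, j = -(n : ℤ) := ⟨j.natAbs, by omega⟩
    rw [cf_polyF_neg]
    exact Polynomial.coeff_eq_zero_of_natDegree_lt (by omega)
  simpa using this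

lemma cf_intPoly (x : FF K) (j : ℤ) (hj : j ≤ 0) : cf j (polyF (intPoly x)) = cf j x := by
  obtain ⟨n, rfl⟩ : ∃ n : ℕ, j = -(n : ℤ) := ⟨j.natAbs, by omega⟩
  rw [cf_polyF_neg]
  unfold intPoly
  rw [Polynomial.finsetSum_coeff]
  simp only [Polynomial.coeff_monomial, Finset.sum_ite_eq', Finset.mem_range]
  split_ifs with h
  · rfl
  · exact (HahnSeries.coeff_eq_zero_of_lt_order (x := toL x) (by omega)).symm

lemma fnorm_sub_intPoly {x : FF K} {k : ℤ} (h : ∀ j, 1 ≤ j → j < k → cf j x = 0) :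
    fnorm (x - polyF (intPoly x)) ≤ qq K ^ (-k) := by
  refine fnorm_le_of_cf fun j hj => ?_
  rw [map_sub]
  rcases le_or_gt j 0 with h0 | h0
  · rw [cf_intPoly x j h0, sub_self]
  · rw [h j (by omega) hj, cf_polyF_pos _ _ h0, sub_self]

lemma le_vnorm {ι : Type*} [Fintype ι] (v : ι → FF K) (i : ι) : fnorm (v i) ≤ vnorm v :=
  le_ciSup (f := fun i => fnorm (v i)) (Set.finite_range _).bddAbove i

lemma vnorm_le {ι : Type*} [Fintype ι] {v : ι → FF K} {r : ℝ} (hr : 0 ≤ r)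
    (h : ∀ i, fnorm (v i) ≤ r) : vnorm v ≤ r := Real.iSup_le h hr

lemma vnorm_nonneg {ι : Type*} [Fintype ι] (v : ι → FF K) : 0 ≤ vnorm v :=
  Real.iSup_nonneg fun _ => fnorm_nonneg _

lemma vdist_le_of_cf {ι : Type*} [Fintype ι] {v : ι → FF K} {k : ℤ}
    (h : ∀ i j, 1 ≤ j → j < k → cf j (v i) = 0) : vdist v ≤ qq K ^ (-k) := by
  refine (ciInf_le ⟨0, ?_⟩ (fun i => intPoly (v i))).trans ?_
  · rintro _ ⟨y, rfl⟩; exact vnorm_nonneg _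
  · exact vnorm_le (zpow_nonneg qq_pos.le _) fun i => fnorm_sub_intPoly (h i)

def Near (r : ℝ) (f : FF K) : Prop := ∃ p : Polynomial K, fnorm (f - polyF p) ≤ r

lemma near_of_vdist {ι : Type*} [Fintype ι] {v : ι → FF K} {r r' : ℝ} (h : vdist v ≤ r)
    (hr : r < r') (i : ι) : Near r' (v i) := by
  obtain ⟨y, hy⟩ := exists_lt_of_ciInf_lt (lt_of_le_of_lt h hr)
  exact ⟨y i, (le_vnorm (fun i => v i - polyF (y i)) i).trans hy.le⟩

lemma Near.mono {r r' : ℝ} {f : FF K} (h : Near r f) (hr : r ≤ r') : Near r' f := by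
  obtain ⟨p, hp⟩ := h; exact ⟨p, hp.trans hr⟩

lemma Near.sub {r : ℝ} {f g : FF K} (h : Near r f) (h' : Near r g) : Near r (f - g) := by
  obtain ⟨p, hp⟩ := h
  obtain ⟨p', hp'⟩ := h'
  refine ⟨p - p', ?_⟩
  have : f - g - polyF (p - p') = (f - polyF p) + -(g - polyF p') := by rw [polyF_sub]; ring
  rw [this]
  refine (fnorm_add_le _ _).trans (max_le hp ?_)
  rwa [fnorm_neg]

lemma Near.sum_mul {ι : Type*} [Fintype ι] {r B : ℝ} (hr : 0 ≤ r) (hB : 0 ≤ B)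
    {f : ι → FF K} {P : ι → Polynomial K} (hP : pnorm P ≤ B) (h : ∀ i, Near r (f i)) :
    Near (B * r) (∑ i, polyF (P i) * f i) := by
  choose p hp using h
  refine ⟨∑ i, P i * p i, ?_⟩
  rw [polyF_sum, ← Finset.sum_sub_distrib]
  refine fnorm_sum_le _ _ (mul_nonneg hB hr) fun i _ => ?_
  rw [polyF_mul, ← mul_sub, fnorm_mul]
  exact mul_le_mul ((le_vnorm (fun i => polyF (P i)) i).trans hP) (hp i) (fnorm_nonneg _) hB

lemma Near.cf_eq_zero {r : ℝ} {f : FF K} (h : Near r f) {J : ℤ} (hJ : 1 ≤ J)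
    (hr : r < qq K ^ (-J)) : cf J f = 0 := by
  obtain ⟨p, hp⟩ := h
  have := cf_of_fnorm_lt (lt_of_le_of_lt hp hr) J le_rfl
  rwa [map_sub, cf_polyF_pos _ _ (by omega), sub_zero] at this

lemma matrix_surj {m n : Type*} [Fintype m] [Fintype n] (M : Matrix m n K)
    (h : ∀ y, M.transpose.mulVec y = 0 → y = 0) : Function.Surjective M.mulVec := by
  rw [Matrix.mulVec_surjective_iff_exists_right_inverse]
  obtain ⟨g, hg⟩ := LinearMap.exists_leftInverse_of_injective (Matrix.toLin' M.transpose)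
    (LinearMap.ker_eq_bot'.2 fun y hy => h y (by simpa using hy))
  refine ⟨(LinearMap.toMatrix' g).transpose, ?_⟩
  have := congrArg LinearMap.toMatrix' hg
  rw [LinearMap.toMatrix'_comp, LinearMap.toMatrix'_toLin', LinearMap.toMatrix'_id] at this
  rw [← Matrix.transpose_inj, Matrix.transpose_mul, Matrix.transpose_transpose, this,
    Matrix.transpose_one]

/-- polynomial from a coefficient vector -/
def mkP {b : ℕ} (x : Fin b → K) : Polynomial K := ∑ l : Fin b, Polynomial.monomial (l : ℕ) (x l)

lemma mkP_coeff {b : ℕ} (x : Fin b → K) (l : Fin b) : (mkP x).coeff l = x l := by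
  unfold mkP
  rw [Polynomial.finsetSum_coeff]
  simp [Polynomial.coeff_monomial, Fin.val_inj]

lemma mkP_natDegree {b : ℕ} (x : Fin (b + 1) → K) : (mkP x).natDegree ≤ b :=
  Polynomial.natDegree_sum_le_of_forall_le _ _ fun l _ =>
    (Polynomial.natDegree_monomial_le _).trans (by omega)

lemma cf_mkP_mul {b : ℕ} (x : Fin (b + 1) → K) (f : FF K) (k : ℤ) :
    cf k (polyF (mkP x) * f) = ∑ l : Fin (b + 1), x l * cf (k + (l : ℕ)) f := by
  rw [cf_poly_mul k _ (b + 1) (by have := mkP_natDegree x; omega), Finset.sum_range]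
  exact Finset.sum_congr rfl fun l _ => by rw [mkP_coeff]

lemma transfer {m n : ℕ} (A : Matrix (Fin n) (Fin m) (FF K)) (a b : ℕ)
    (h : ∀ y : Fin n → Polynomial K, y ≠ 0 →
      vdist (A.transpose.mulVec (fun i => polyF (y i))) ≤ qq K ^ (-((b : ℤ) + 2)) →
      pnorm y ≤ qq K ^ a → False) (θ : Fin n → FF K) :
    ∃ x : Fin m → Polynomial K,
      vdist (A.mulVec (fun j => polyF (x j)) - θ) ≤ qq K ^ (-((a : ℤ) + 2)) ∧
      pnorm x ≤ qq K ^ b := by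
  let M : Matrix (Fin n × Fin (a + 1)) (Fin m × Fin (b + 1)) K :=
    Matrix.of fun p r => cf ((1 : ℤ) + (p.2 : ℕ) + (r.2 : ℕ)) (A p.1 r.1)
  have hM : Function.Surjective M.mulVec := by
    apply matrix_surj
    intro y hy
    by_contra hy0
    refine h (fun i => mkP fun k => y (i, k)) ?_ ?_ ?_
    · intro h0
      apply hy0
      ext ⟨i, k⟩
      have := congrArg (fun P => Polynomial.coeff P k) (congrFun h0 i)
      simpa [mkP_coeff] using this
    · refine vdist_le_of_cf fun j l h1 h2 => ?_
      have := congrFun hy (j, ⟨(l - 1).toNat, by omega⟩)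
      rw [Matrix.mulVec, dotProduct, Fintype.sum_prod_type] at this
      rw [Matrix.mulVec, dotProduct, map_sum]
      rw [Pi.zero_apply] at this
      rw [← this]
      refine Finset.sum_congr rfl fun i _ => ?_
      rw [mul_comm, cf_mkP_mul]
      refine Finset.sum_congr rfl fun k _ => ?_
      simp only [M, Matrix.transpose_apply, Matrix.of_apply]
      rw [mul_comm]
      congr 3
      omega
    · exact vnorm_le (by positivity) fun i => fnorm_polyF_le (mkP_natDegree _)
  obtain ⟨x, hx⟩ := hM fun p => cf ((1 : ℤ) + (p.2 : ℕ)) (θ p.1)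
  refine ⟨fun j => mkP fun l => x (j, l), ?_, ?_⟩
  · refine vdist_le_of_cf fun i k h1 h2 => ?_
    have := congrFun hx (i, ⟨(k - 1).toNat, by omega⟩)
    rw [Matrix.mulVec, dotProduct, Fintype.sum_prod_type] at this
    have hk : (1 : ℤ) + ((k - 1).toNat : ℕ) = k := by omega
    simp only [hk] at this
    rw [Pi.sub_apply, map_sub, ← this, Matrix.mulVec, dotProduct, map_sum, sub_eq_zero]
    refine Finset.sum_congr rfl fun j _ => ?_
    rw [mul_comm, cf_mkP_mul]
    refine Finset.sum_congr rfl fun l _ => ?_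
    simp only [M, Matrix.of_apply, hk]
    rw [mul_comm]
  · exact vnorm_le (by positivity) fun i => fnorm_polyF_le (mkP_natDegree _)

lemma solv_of_not {m n : ℕ} {A : Matrix (Fin n) (Fin m) (FF K)} {ω H : ℝ} (hω : 0 < ω)
    (hH : 1 ≤ H) (h : ¬ SolvHom A.transpose ω H) (θ : Fin n → FF K) :
    Solv A θ (1 / ω) (H ^ ω) := by
  have hH0 : 0 < H := by linarith
  obtain ⟨a, ha, ha'⟩ := exists_nat_pow_near hH (one_lt_qq (K := K))
  obtain ⟨b, hb, hb'⟩ := exists_nat_pow_near (Real.one_le_rpow hH hω.le) (one_lt_qq (K := K))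
  have h3 : qq K ^ (-((b : ℤ) + 2)) ≤ H ^ (-ω) := by
    rw [Real.rpow_neg hH0.le, zpow_neg]
    refine inv_anti₀ (Real.rpow_pos_of_pos hH0 _) (hb'.le.trans ?_)
    rw [← zpow_natCast]
    exact zpow_le_zpow_right₀ one_lt_qq.le (by push_cast; omega)
  obtain ⟨x, hx, hx'⟩ := transfer A a b
    (fun y hy h1 h2 => h ⟨y, hy, h1.trans h3, h2.trans ha⟩) θ
  refine ⟨x, hx.trans ?_, hx'.trans hb⟩
  rw [← Real.rpow_mul hH0.le, mul_neg, mul_one_div_cancel hω.ne', Real.rpow_neg_one, zpow_neg]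
  refine inv_anti₀ hH0 (ha'.le.trans ?_)
  rw [← zpow_natCast]
  exact zpow_le_zpow_right₀ one_lt_qq.le (by push_cast; omega)

lemma inv_le_of_forall {a b : ℝ≥0∞}
    (h : ∀ ω : ℝ, 0 < ω → a < ENNReal.ofReal ω → ENNReal.ofReal (1 / ω) ≤ b) : a⁻¹ ≤ b := by
  refine le_of_forall_lt fun c hc => ?_
  rw [ENNReal.lt_inv_iff_lt_inv] at hc
  obtain ⟨ω, h0, h1, h2⟩ := ENNReal.lt_iff_exists_real_btwn.1 hc
  have hω : 0 < ω := by
    rcases h0.eq_or_lt with h0 | h0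
    · rw [← h0] at h1; simp at h1
    · exact h0
  refine lt_of_lt_of_le ?_ (h ω hω h1)
  rw [one_div, ENNReal.ofReal_inv_of_pos hω, ENNReal.lt_inv_iff_lt_inv]
  exact h2

lemma lower1 {m n : ℕ} (A : Matrix (Fin n) (Fin m) (FF K)) (θ : Fin n → FF K) :
    (omegaHatHom A.transpose)⁻¹ ≤ omegaInhom A θ := by
  refine inv_le_of_forall fun ω hω h => ?_
  have h1 : ¬ ∃ H₀ : ℝ, ∀ H : ℝ, H₀ ≤ H → SolvHom A.transpose ω H := fun hc =>
    absurd h (not_lt.2 (le_iSup₂ (f := fun (ω : ℝ)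
      (_ : ∃ H₀ : ℝ, ∀ H : ℝ, H₀ ≤ H → SolvHom A.transpose ω H) => ENNReal.ofReal ω) ω hc))
  push Not at h1
  refine le_iSup₂ (f := fun (ω : ℝ)
    (_ : ∀ H₀ : ℝ, ∃ H : ℝ, H₀ ≤ H ∧ Solv A θ ω H) => ENNReal.ofReal ω) (1 / ω) ?_
  intro H₀
  obtain ⟨H, hH, hn⟩ := h1 (max 1 ((max 1 H₀) ^ (1 / ω)))
  refine ⟨H ^ ω, ?_, solv_of_not hω (le_trans (le_max_left _ _) hH) hn θ⟩
  have h3 : (max 1 H₀) ^ (1 / ω) ≤ H := le_trans (le_max_right _ _) hH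
  have h4 := Real.rpow_le_rpow (by positivity) h3 hω.le
  rw [← Real.rpow_mul (by positivity), one_div_mul_cancel hω.ne', Real.rpow_one] at h4
  exact le_trans (le_max_right _ _) h4

lemma lower2 {m n : ℕ} (A : Matrix (Fin n) (Fin m) (FF K)) (θ : Fin n → FF K) :
    (omegaHom A.transpose)⁻¹ ≤ omegaHatInhom A θ := by
  refine inv_le_of_forall fun ω hω h => ?_
  have h1 : ¬ ∀ H₀ : ℝ, ∃ H : ℝ, H₀ ≤ H ∧ SolvHom A.transpose ω H := fun hc =>
    absurd h (not_lt.2 (le_iSup₂ (f := fun (ω : ℝ)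
      (_ : ∀ H₀ : ℝ, ∃ H : ℝ, H₀ ≤ H ∧ SolvHom A.transpose ω H) => ENNReal.ofReal ω) ω hc))
  push Not at h1
  obtain ⟨H₀, h1⟩ := h1
  refine le_iSup₂ (f := fun (ω : ℝ)
    (_ : ∃ H₀ : ℝ, ∀ H : ℝ, H₀ ≤ H → Solv A θ ω H) => ENNReal.ofReal ω) (1 / ω) ?_
  refine ⟨(max 1 H₀) ^ ω, fun H hH => ?_⟩
  have hH0 : 0 < H := lt_of_lt_of_le (by positivity) hH
  have h4 := Real.rpow_le_rpow (z := 1 / ω) (by positivity) hH (by positivity)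
  rw [← Real.rpow_mul (by positivity), mul_one_div_cancel hω.ne', Real.rpow_one] at h4
  have := solv_of_not hω (le_trans (le_max_left _ _) h4) (h1 _ (le_trans (le_max_right _ _) h4)) θ
  rwa [← Real.rpow_mul hH0.le, one_div_mul_cancel hω.ne', Real.rpow_one] at this

lemma poly_countable : Countable (Polynomial K) := by
  rw [← Cardinal.mk_le_aleph0_iff]
  exact Polynomial.cardinalMk_le_max.trans (max_le (Cardinal.mk_le_aleph0) le_rfl)

lemma measurableSet_cf_mul (c : FF K) (k : ℤ) (w : K) : MeasurableSet {x : FF K | cf k (c * x) = w} := by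
  refine IsOpen.measurableSet ?_
  rw [Metric.isOpen_iff]
  intro x hx
  refine ⟨qq K ^ (-k) / (fnorm c + 1), div_pos (zpow_pos qq_pos _)
    (by linarith [fnorm_nonneg c]), fun x' hx' => ?_⟩
  have h1 : fnorm (x' - x) < qq K ^ (-k) / (fnorm c + 1) := hx'
  rw [lt_div_iff₀ (by linarith [fnorm_nonneg c])] at h1
  have h2 : cf k (c * (x' - x)) = 0 := by
    refine cf_of_fnorm_lt ?_ k le_rfl
    rw [fnorm_mul]
    nlinarith [fnorm_nonneg (x' - x)]
  rw [mul_sub, map_sub, sub_eq_zero] at h2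
  exact h2.trans hx

lemma measurableSet_cf {n : ℕ} (y : Fin n → Polynomial K) (k : ℤ) (w : K) :
    MeasurableSet {θ : Fin n → FF K | cf k (∑ i, polyF (y i) * θ i) = w} := by
  have : {θ : Fin n → FF K | cf k (∑ i, polyF (y i) * θ i) = w} =
      ⋃ v ∈ {v : Fin n → K | ∑ i, v i = w},
        ⋂ i, (fun θ : Fin n → FF K => θ i) ⁻¹' {x | cf k (polyF (y i) * x) = v i} := by
    ext θ
    simp only [map_sum, Set.mem_ofPred_eq, Set.mem_iUnion, Set.mem_iInter, Set.mem_preimage]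
    constructor
    · intro h
      exact ⟨fun i => cf k (polyF (y i) * θ i), h, fun i => rfl⟩
    · rintro ⟨v, hv, h⟩
      simpa only [h] using hv
  rw [this]
  refine MeasurableSet.biUnion (Set.to_countable _) fun v _ => MeasurableSet.iInter fun i => ?_
  exact measurable_pi_apply i (measurableSet_cf_mul _ _ _)

/-- unit polydisc around `p` -/
def BB {n : ℕ} (p : Fin n → FF K) : Set (Fin n → FF K) := {θ | ∀ i, fnorm (θ i - p i) < 1}

lemma measurableSet_BB {n : ℕ} (p : Fin n → FF K) : MeasurableSet (BB p) := by
  have : BB p = ⋂ i, (fun θ : Fin n → FF K => θ i) ⁻¹' (Metric.ball (p i) 1) := by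
    ext θ
    simp only [Set.mem_iInter]
    rfl
  rw [this]
  exact MeasurableSet.iInter fun i => measurable_pi_apply i Metric.isOpen_ball.measurableSet

def TT {n : ℕ} (p : Fin n → FF K) (y : Fin n → Polynomial K) (J : ℕ) (w : Fin J → K) :
    Set (Fin n → FF K) :=
  BB p ∩ ⋂ l : Fin J, {θ | cf ((l : ℕ) + 1 : ℤ) (∑ i, polyF (y i) * θ i) = w l}

lemma measurableSet_TT {n : ℕ} (p : Fin n → FF K) (y : Fin n → Polynomial K) (J : ℕ)
    (w : Fin J → K) : MeasurableSet (TT p y J w) :=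
  (measurableSet_BB p).inter (MeasurableSet.iInter fun _ => measurableSet_cf _ _ _)

/-- element of the unit disc with given first coefficients -/
lemma exists_frac (J : ℕ) (w : Fin J → K) :
    ∃ f : FF K, fnorm f < 1 ∧ ∀ l : Fin J, cf ((l : ℕ) + 1 : ℤ) f = w l := by
  let s : FF K := (∑ l : Fin J, HahnSeries.single ((l : ℕ) + 1 : ℤ) (w l) : LaurentSeries K)
  have hs : ∀ k, cf k s = ∑ l : Fin J, if k = ((l : ℕ) + 1 : ℤ) then w l else 0 := by
    intro k
    show (∑ l : Fin J, HahnSeries.single ((l : ℕ) + 1 : ℤ) (w l) : LaurentSeries K).coeff k = _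
    rw [HahnSeries.coeff_sum]
    exact Finset.sum_congr rfl fun l _ => by rw [HahnSeries.coeff_single]; congr
  refine ⟨s, ?_, fun l => ?_⟩
  · refine lt_of_le_of_lt (fnorm_le_of_cf (k := 1) fun j hj => ?_) ?_
    · rw [hs]
      exact Finset.sum_eq_zero fun l _ => if_neg (by omega)
    · rw [zpow_neg, zpow_one]
      exact inv_lt_one_of_one_lt₀ one_lt_qq
  · rw [hs, Finset.sum_eq_single l]
    · simp
    · intro b _ hb
      refine if_neg fun h => hb ?_
      ext; omega
    · simp

lemma measure_TT {n : ℕ} (μ : Measure (Fin n → FF K))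
    (hinv : ∀ a : Fin n → FF K, ∀ s : Set (Fin n → FF K), MeasurableSet s →
      μ ((fun θ => a + θ) ⁻¹' s) = μ s)
    (hone : μ {θ : Fin n → FF K | ∀ i, fnorm (θ i) < 1} = 1)
    (p : Fin n → FF K) (y : Fin n → Polynomial K) (hy : y ≠ 0) (J : ℕ) :
    μ (TT p y J 0) ≤ ENNReal.ofReal (qq K ^ (-(J : ℝ))) := by
  have hB : μ (BB p) = 1 := by
    rw [← hone, ← hinv p _ (measurableSet_BB p)]
    congr 1
    ext θ
    simp [BB]
  have hT : ∀ w : Fin J → K, μ (TT p y J w) = μ (TT p y J 0) := by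
    intro w
    obtain ⟨f, hf, hfw⟩ := exists_frac J w
    obtain ⟨i0, hi0⟩ := Function.ne_iff.1 hy
    have hi0' : y i0 ≠ 0 := hi0
    let g : Fin n → FF K := Pi.single i0 ((polyF (y i0))⁻¹ * f)
    have hg : ∑ i, polyF (y i) * g i = f := by
      rw [Finset.sum_eq_single i0]
      · simp only [g, Pi.single_eq_same]
        rw [mul_inv_cancel_left₀ (polyF_ne_zero hi0')]
      · intro b _ hb
        simp only [g, Pi.single_eq_of_ne hb, mul_zero]
      · simp
    have hg1 : ∀ i, fnorm (g i) < 1 := by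
      intro i
      by_cases hi : i = i0
      · subst hi
        simp only [g, Pi.single_eq_same]
        have h1 := one_le_fnorm_polyF hi0'
        have h2 : fnorm (polyF (y i)) * fnorm ((polyF (y i))⁻¹ * f) = fnorm f := by
          rw [← fnorm_mul, mul_inv_cancel_left₀ (polyF_ne_zero hi0')]
        nlinarith [fnorm_nonneg ((polyF (y i))⁻¹ * f)]
      · simp only [g, Pi.single_eq_of_ne hi]
        rw [fnorm_eq_zero.2 rfl]; exact one_pos
    rw [← hinv g _ (measurableSet_TT p y J w)]
    congr 1
    ext θ
    have e1 : (g + θ ∈ BB p) ↔ θ ∈ BB p := by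
      constructor
      · intro h i
        have : θ i - p i = ((g + θ) i - p i) + -(g i) := by rw [Pi.add_apply]; ring
        rw [this]
        refine lt_of_le_of_lt (fnorm_add_le _ _) (max_lt (h i) ?_)
        rw [fnorm_neg]; exact hg1 i
      · intro h i
        have : (g + θ) i - p i = (θ i - p i) + (g i) := by rw [Pi.add_apply]; ring
        rw [this]
        exact lt_of_le_of_lt (fnorm_add_le _ _) (max_lt (h i) (hg1 i))
    have e2 : ∑ i, polyF (y i) * (g + θ) i = f + ∑ i, polyF (y i) * θ i := by
      simp only [Pi.add_apply, mul_add, Finset.sum_add_distrib, hg]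
    simp only [TT, Set.mem_preimage, Set.mem_inter_iff, Set.mem_iInter, Set.mem_ofPred_eq, e1, e2]
    simp only [map_add, hfw, Pi.zero_apply, add_eq_left]
  have hsum : μ (⋃ w ∈ (Finset.univ : Finset (Fin J → K)), TT p y J w) =
      ∑ w : Fin J → K, μ (TT p y J w) := by
    refine measure_biUnion_finset ?_ fun w _ => measurableSet_TT p y J w
    intro w _ w' _ hww
    rw [Function.onFun, Set.disjoint_left]
    intro θ h1 h2
    apply hww
    ext l
    have a1 := Set.mem_iInter.1 h1.2 l
    have a2 := Set.mem_iInter.1 h2.2 l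
    exact a1.symm.trans a2
  have hle : μ (⋃ w ∈ (Finset.univ : Finset (Fin J → K)), TT p y J w) ≤ 1 := by
    rw [← hB]
    exact measure_mono (Set.iUnion₂_subset fun w _ => Set.inter_subset_left)
  rw [hsum, Finset.sum_congr rfl fun w _ => hT w, Finset.sum_const, Finset.card_univ,
    Fintype.card_fun, Fintype.card_fin, nsmul_eq_mul, mul_comm] at hle
  have h3 := (ENNReal.le_div_iff_mul_le (Or.inl (by positivity)) (Or.inl (by simp))).2 hle
  refine h3.trans (le_of_eq ?_)
  rw [Real.rpow_neg qq_pos.le, Real.rpow_natCast, ENNReal.ofReal_inv_of_pos (pow_pos qq_pos _),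
    one_div, ENNReal.ofReal_pow qq_pos.le]
  simp

/-- the main pointwise estimate -/
lemma mem_TT {m n : ℕ} {A : Matrix (Fin n) (Fin m) (FF K)} {θ : Fin n → FF K}
    {p : Fin n → FF K} {y : Fin n → Polynomial K} {x : Fin m → Polynomial K}
    {s ω τ δ X : ℝ} {k : ℕ} (hX : qq K ^ (k : ℝ) ≤ X)
    (hδ : 0 < δ) (h1 : δ ≤ s * ω - 1) (h2 : δ ≤ τ - s)
    (hy : pnorm y ≤ X ^ s) (hy' : vdist (A.transpose.mulVec fun i => polyF (y i)) ≤ X ^ (-(s * ω)))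
    (hx : pnorm x ≤ qq K * X) (hx' : vdist (A.mulVec (fun j => polyF (x j)) - θ) ≤ X ^ (-τ))
    (hθ : θ ∈ BB p) : θ ∈ TT p y (⌊δ * k⌋₊ - 3) 0 := by
  have hq := one_lt_qq (K := K)
  have hq0 := qq_pos (K := K)
  have hX0 : 0 < X := lt_of_lt_of_le (Real.rpow_pos_of_pos hq0 _) hX
  have hX1 : 1 ≤ X := le_trans (Real.one_le_rpow hq.le (Nat.cast_nonneg _)) hX
  have lt_q : ∀ e : ℝ, X ^ e < qq K * X ^ e := fun e => by
    have := Real.rpow_pos_of_pos hX0 e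
    nlinarith
  have n1 := Near.sum_mul (K := K) (B := qq K * X) (mul_nonneg hq0.le (Real.rpow_pos_of_pos hX0 _).le)
    (mul_nonneg hq0.le hX0.le) hx fun j => near_of_vdist hy' (lt_q _) j
  have n2 := Near.sum_mul (K := K) (mul_nonneg hq0.le (Real.rpow_pos_of_pos hX0 _).le)
    (Real.rpow_pos_of_pos hX0 s).le hy fun i => near_of_vdist hx' (lt_q _) i
  have e1 : qq K * X * (qq K * X ^ (-(s * ω))) ≤ qq K ^ 2 * X ^ (-δ) := by
    have : X * X ^ (-(s * ω)) = X ^ (1 + -(s * ω)) := by rw [Real.rpow_add hX0, Real.rpow_one]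
    calc _ = qq K ^ 2 * (X * X ^ (-(s * ω))) := by ring
      _ ≤ _ := by
        rw [this]
        exact mul_le_mul_of_nonneg_left (Real.rpow_le_rpow_of_exponent_le hX1 (by linarith))
          (by positivity)
  have e2 : X ^ s * (qq K * X ^ (-τ)) ≤ qq K ^ 2 * X ^ (-δ) := by
    have : X ^ s * X ^ (-τ) = X ^ (s + -τ) := by rw [Real.rpow_add hX0]
    calc _ = qq K * (X ^ s * X ^ (-τ)) := by ring
      _ ≤ qq K ^ 2 * (X ^ s * X ^ (-τ)) := by
        refine mul_le_mul_of_nonneg_right (by nlinarith) (by positivity)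
      _ ≤ _ := by
        rw [this]
        exact mul_le_mul_of_nonneg_left (Real.rpow_le_rpow_of_exponent_le hX1 (by linarith))
          (by positivity)
  have n3 := (n1.mono e1).sub (n2.mono e2)
  have e3 : ∑ j, polyF (x j) * (A.transpose.mulVec fun i => polyF (y i)) j -
      ∑ i, polyF (y i) * (A.mulVec (fun j => polyF (x j)) - θ) i = ∑ i, polyF (y i) * θ i := by
    simp only [Pi.sub_apply, mul_sub, Finset.sum_sub_distrib]
    have : ∑ j, polyF (x j) * (A.transpose.mulVec fun i => polyF (y i)) j =
        ∑ i, polyF (y i) * (A.mulVec (fun j => polyF (x j))) i := by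
      simp only [Matrix.mulVec, dotProduct, Finset.mul_sum, Matrix.transpose_apply]
      rw [Finset.sum_comm]
      refine Finset.sum_congr rfl fun i _ => Finset.sum_congr rfl fun j _ => by ring
    rw [this]; ring
  rw [e3] at n3
  refine ⟨hθ, Set.mem_iInter.2 fun l => ?_⟩
  refine n3.cf_eq_zero (by omega) ?_
  have hl : (l : ℕ) + 1 + 3 ≤ ⌊δ * k⌋₊ := by have := l.2; omega
  have hl' : ((l : ℕ) : ℝ) + 1 + 3 ≤ δ * k := by
    refine le_trans ?_ (Nat.floor_le (by positivity))
    exact_mod_cast hl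
  have e4 : X ^ (-δ) ≤ qq K ^ (-(δ * k)) := by
    rw [show -(δ * k) = (k : ℝ) * (-δ) by ring, Real.rpow_mul hq0.le]
    exact Real.rpow_le_rpow_of_nonpos (Real.rpow_pos_of_pos hq0 _) hX (by linarith)
  calc qq K ^ 2 * X ^ (-δ) ≤ qq K ^ (2 : ℝ) * qq K ^ (-(δ * k)) := by
        rw [Real.rpow_two]
        exact mul_le_mul_of_nonneg_left e4 (by positivity)
    _ = qq K ^ (2 + -(δ * k)) := (Real.rpow_add hq0 _ _).symm
    _ < qq K ^ (((-((l : ℕ) + 1 : ℤ)) : ℤ) : ℝ) :=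
        Real.rpow_lt_rpow_of_exponent_lt hq (by push_cast; linarith)
    _ = _ := Real.rpow_intCast _ _

lemma tsum_fin {δ : ℝ} (hδ : 0 < δ) :
    ∑' k : ℕ, ENNReal.ofReal (qq K ^ (-((⌊δ * k⌋₊ - 3 : ℕ) : ℝ))) ≠ ⊤ := by
  have hq := one_lt_qq (K := K)
  have hq0 := qq_pos (K := K)
  have hs : Summable fun k : ℕ => qq K ^ (4 : ℝ) * (qq K ^ (-δ)) ^ k :=
    (summable_geometric_of_lt_one (by positivity)
      (Real.rpow_lt_one_of_one_lt_of_neg hq (by linarith))).mul_left _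
  refine ne_top_of_le_ne_top hs.tsum_ofReal_ne_top ?_
  refine ENNReal.tsum_le_tsum fun k => ENNReal.ofReal_le_ofReal ?_
  rw [← Real.rpow_natCast, ← Real.rpow_mul hq0.le, ← Real.rpow_add hq0]
  refine Real.rpow_le_rpow_of_exponent_le hq.le ?_
  have h1 := Nat.lt_floor_add_one (δ * (k : ℝ))
  have h2 : (⌊δ * (k : ℝ)⌋₊ : ℝ) ≤ ((⌊δ * k⌋₊ - 3 : ℕ) : ℝ) + 3 := by
    have : ⌊δ * (k : ℝ)⌋₊ ≤ (⌊δ * k⌋₊ - 3) + 3 := by omega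
    exact_mod_cast this
  linarith

lemma mem_BB_intPoly {n : ℕ} (θ : Fin n → FF K) : θ ∈ BB fun i => polyF (intPoly (θ i)) := by
  intro i
  refine lt_of_le_of_lt (fnorm_sub_intPoly (k := 1) fun j h1 h2 => by omega) ?_
  rw [zpow_neg, zpow_one]
  exact inv_lt_one_of_one_lt₀ one_lt_qq

lemma ae_main {m n : ℕ} (A : Matrix (Fin n) (Fin m) (FF K)) (μ : Measure (Fin n → FF K))
    (hinv : ∀ a : Fin n → FF K, ∀ s : Set (Fin n → FF K), MeasurableSet s →
      μ ((fun θ => a + θ) ⁻¹' s) = μ s)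
    (hone : μ {θ : Fin n → FF K | ∀ i, fnorm (θ i) < 1} = 1)
    {s ω τ : ℝ} (h1 : 1 < s * ω) (h2 : s < τ) (X : ℕ → ℝ) (y : ℕ → Fin n → Polynomial K)
    (hX : ∀ k : ℕ, qq K ^ (k : ℝ) ≤ X k) (hy0 : ∀ k, y k ≠ 0)
    (hy : ∀ k, pnorm (y k) ≤ X k ^ s)
    (hy' : ∀ k, vdist (A.transpose.mulVec fun i => polyF (y k i)) ≤ X k ^ (-(s * ω))) :
    ∀ᵐ θ ∂μ, ∀ᶠ k in atTop, ∀ x : Fin m → Polynomial K, pnorm x ≤ qq K * X k →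
      ¬ vdist (A.mulVec (fun j => polyF (x j)) - θ) ≤ X k ^ (-τ) := by
  have hδ : 0 < min (s * ω - 1) (τ - s) := lt_min (by linarith) (by linarith)
  set δ := min (s * ω - 1) (τ - s) with hδdef
  haveI : Countable (Polynomial K) := poly_countable
  have key : ∀ᵐ θ ∂μ, ∀ P : Fin n → Polynomial K, ∀ᶠ k : ℕ in atTop,
      θ ∉ TT (fun i => polyF (P i)) (y k) (⌊δ * k⌋₊ - 3) 0 := by
    rw [ae_all_iff]
    intro P
    refine ae_eventually_notMem (ne_top_of_le_ne_top (tsum_fin (K := K) hδ) ?_)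
    exact ENNReal.tsum_le_tsum fun k => measure_TT μ hinv hone _ _ (hy0 k) _
  filter_upwards [key] with θ hθ
  filter_upwards [hθ fun i => intPoly (θ i)] with k hk x hx hx'
  exact hk (mem_TT (hX k) hδ (min_le_left _ _) (min_le_right _ _) (hy k) (hy' k) hx hx'
    (mem_BB_intPoly θ))

lemma le_inv_ae {n : ℕ} {μ : Measure (Fin n → FF K)} {f : (Fin n → FF K) → ℝ≥0∞} {a : ℝ≥0∞}
    (h : ∀ τ : ℝ, 0 < τ → (ENNReal.ofReal τ)⁻¹ < a → ∀ᵐ θ ∂μ, f θ ≤ ENNReal.ofReal τ) :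
    ∀ᵐ θ ∂μ, f θ ≤ a⁻¹ := by
  have : ∀ᵐ θ ∂μ, ∀ r : ℚ, 0 < (r : ℝ) → (ENNReal.ofReal r)⁻¹ < a → f θ ≤ ENNReal.ofReal r := by
    rw [ae_all_iff]
    intro r
    by_cases h1 : 0 < (r : ℝ)
    · by_cases h2 : (ENNReal.ofReal r)⁻¹ < a
      · filter_upwards [h r h1 h2] with θ hθ _ _ using hθ
      · exact Filter.Eventually.of_forall fun θ _ h => absurd h h2
    · exact Filter.Eventually.of_forall fun θ h => absurd h h1
  filter_upwards [this] with θ hθ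
  by_contra hc
  push Not at hc
  obtain ⟨r, h0, h1, h2⟩ := ENNReal.lt_iff_exists_rat_btwn.1 hc
  have hr : (0 : ℝ) < r := by
    rcases h0.eq_or_lt with h0 | h0
    · rw [← h0] at h1; simp at h1
    · exact_mod_cast h0
  exact absurd (hθ r hr (ENNReal.inv_lt_iff_inv_lt.1 h1)) (not_le.2 h2)

lemma solv_mono {m n : ℕ} {A : Matrix (Fin n) (Fin m) (FF K)} {θ : Fin n → FF K} {ω τ H : ℝ}
    (hH : 1 ≤ H) (h : τ ≤ ω) (hs : Solv A θ ω H) : Solv A θ τ H := by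
  obtain ⟨x, hx, hx'⟩ := hs
  exact ⟨x, hx.trans (Real.rpow_le_rpow_of_exponent_le hH (by linarith)), hx'⟩

lemma exists_s {ω τ : ℝ} (hτ : 0 < τ) (h : (ENNReal.ofReal τ)⁻¹ < ENNReal.ofReal ω) :
    0 < ω ∧ ∃ s, 0 < s ∧ 1 < s * ω ∧ s < τ := by
  have hω : 0 < ω := by
    by_contra hc
    rw [ENNReal.ofReal_of_nonpos (not_lt.1 hc)] at h
    simp at h
  rw [← ENNReal.ofReal_inv_of_pos hτ, ENNReal.ofReal_lt_ofReal_iff hω] at h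
  have h' : 1 / ω < τ := by
    rw [one_div]; exact inv_lt_of_inv_lt₀ hτ h
  obtain ⟨s, h1, h2⟩ := exists_between h'
  exact ⟨hω, s, lt_trans (by positivity) h1, by rwa [div_lt_iff₀ hω] at h1, h2⟩

lemma upper1 {m n : ℕ} (A : Matrix (Fin n) (Fin m) (FF K)) (μ : Measure (Fin n → FF K))
    (hinv : ∀ a : Fin n → FF K, ∀ s : Set (Fin n → FF K), MeasurableSet s →
      μ ((fun θ => a + θ) ⁻¹' s) = μ s)
    (hone : μ {θ : Fin n → FF K | ∀ i, fnorm (θ i) < 1} = 1) :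
    ∀ᵐ θ ∂μ, omegaInhom A θ ≤ (omegaHatHom A.transpose)⁻¹ := by
  have hq := one_lt_qq (K := K)
  have hq0 := qq_pos (K := K)
  refine le_inv_ae fun τ hτ h => ?_
  obtain ⟨ω, h⟩ := lt_iSup_iff.1 h
  obtain ⟨⟨H₀, hH⟩, h⟩ := lt_iSup_iff.1 h
  obtain ⟨hω, s, hs, hsω, hsτ⟩ := exists_s hτ h
  obtain ⟨N, hN⟩ : ∃ N : ℕ, (max 1 H₀) ^ (1 / s) ≤ qq K ^ N :=
    (pow_unbounded_of_one_lt _ hq).imp fun _ => le_of_lt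
  have hS : ∀ k : ℕ, SolvHom A.transpose ω ((qq K ^ (k + N)) ^ s) := by
    intro k
    refine hH _ ?_
    have h3 : (max 1 H₀) ^ (1 / s) ≤ qq K ^ (k + N) :=
      hN.trans (pow_le_pow_right₀ hq.le (by omega))
    have h4 := Real.rpow_le_rpow (by positivity) h3 hs.le
    rw [← Real.rpow_mul (by positivity), one_div_mul_cancel hs.ne', Real.rpow_one] at h4
    exact le_trans (le_max_right _ _) h4
  choose y hy0 hy' hy using hS
  have := ae_main A μ hinv hone hsω hsτ (fun k => qq K ^ (k + N)) y (fun k => by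
      rw [Real.rpow_natCast]; exact pow_le_pow_right₀ hq.le (by omega)) hy0 hy (fun k => by
      have := hy' k
      rwa [← Real.rpow_mul (by positivity), mul_neg] at this)
  filter_upwards [this] with θ hθ
  obtain ⟨k₀, hk₀⟩ := eventually_atTop.1 hθ
  refine iSup₂_le fun ω' hω' => ENNReal.ofReal_le_ofReal ?_
  by_contra hc
  push Not at hc
  obtain ⟨H, hH1, hsol⟩ := hω' (qq K ^ (k₀ + N))
  have hone' : 1 ≤ H := le_trans (one_le_pow₀ hq.le) hH1
  obtain ⟨x, hx, hx'⟩ := solv_mono hone' hc.le hsol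
  obtain ⟨M, hM, hM'⟩ := exists_nat_pow_near hone' hq
  have hMk : k₀ + N ≤ M := by
    have := (pow_lt_pow_iff_right₀ hq).1 (lt_of_le_of_lt hH1 hM')
    omega
  have e : M - N + N = M := by omega
  refine hk₀ (M - N) (by omega) x ?_ ?_
  · simp only [e]
    refine hx'.trans (hM'.le.trans (le_of_eq ?_))
    rw [pow_succ']
  · simp only [e]
    exact hx.trans (Real.rpow_le_rpow_of_nonpos (by positivity) hM (by linarith))

lemma upper2 {m n : ℕ} (A : Matrix (Fin n) (Fin m) (FF K)) (μ : Measure (Fin n → FF K))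
    (hinv : ∀ a : Fin n → FF K, ∀ s : Set (Fin n → FF K), MeasurableSet s →
      μ ((fun θ => a + θ) ⁻¹' s) = μ s)
    (hone : μ {θ : Fin n → FF K | ∀ i, fnorm (θ i) < 1} = 1) :
    ∀ᵐ θ ∂μ, omegaHatInhom A θ ≤ (omegaHom A.transpose)⁻¹ := by
  have hq := one_lt_qq (K := K)
  have hq0 := qq_pos (K := K)
  refine le_inv_ae fun τ hτ h => ?_
  obtain ⟨ω, h⟩ := lt_iSup_iff.1 h
  obtain ⟨hH, h⟩ := lt_iSup_iff.1 h
  obtain ⟨hω, s, hs, hsω, hsτ⟩ := exists_s hτ h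
  have hS : ∀ k : ℕ, ∃ X : ℝ, qq K ^ (k : ℝ) ≤ X ∧ SolvHom A.transpose ω (X ^ s) := by
    intro k
    obtain ⟨H, h1, h2⟩ := hH ((qq K ^ (k : ℝ)) ^ s)
    have hH0 : 0 < H := lt_of_lt_of_le (by positivity) h1
    refine ⟨H ^ (1 / s), ?_, ?_⟩
    · have h4 := Real.rpow_le_rpow (z := 1 / s) (by positivity) h1 (by positivity)
      rwa [← Real.rpow_mul (by positivity), mul_one_div_cancel hs.ne', Real.rpow_one] at h4
    · rwa [← Real.rpow_mul hH0.le, one_div_mul_cancel hs.ne', Real.rpow_one]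
  choose X hX y hy0 hy' hy using hS
  have hX0 : ∀ k, 0 < X k := fun k => lt_of_lt_of_le (by positivity) (hX k)
  have := ae_main A μ hinv hone hsω hsτ X y hX hy0 hy (fun k => by
      have := hy' k
      rwa [← Real.rpow_mul (hX0 k).le, mul_neg] at this)
  filter_upwards [this] with θ hθ
  obtain ⟨k₀, hk₀⟩ := eventually_atTop.1 hθ
  refine iSup₂_le fun ω' hω' => ENNReal.ofReal_le_ofReal ?_
  by_contra hc
  push Not at hc
  obtain ⟨H₀, hsol⟩ := hω'
  obtain ⟨N, hN⟩ := pow_unbounded_of_one_lt H₀ hq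
  have hk := hX (max k₀ N)
  rw [Real.rpow_natCast] at hk
  have h5 : qq K ^ N ≤ X (max k₀ N) := (pow_le_pow_right₀ hq.le (le_max_right _ _)).trans hk
  have h6 : 1 ≤ X (max k₀ N) := le_trans (one_le_pow₀ hq.le) h5
  obtain ⟨x, hx, hx'⟩ := solv_mono h6 hc.le (hsol _ (hN.le.trans h5))
  refine hk₀ (max k₀ N) (le_max_left _ _) x (hx'.trans ?_) hx
  nlinarith

end Helpers

end FPSDA


/-- For a non-degenerate matrix `A`, the equalities `ω(A, θ) = 1 / ω̂(Aᵀ)` and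
`ω̂(A, θ) = 1 / ω(Aᵀ)` hold for almost all `θ` with respect to the Haar measure on
`𝔽_q((z⁻¹))ⁿ` (formalized as: with respect to any translation-invariant Borel measure
giving measure `1` to the unit polydisc — such a measure is exactly a normalized Haar
measure). -/
theorem exponent_equalities_ae {K : Type*} [Field K] [Fintype K] {m n : ℕ}
    (hm : 0 < m) (hn : 0 < n)
    (A : Matrix (Fin n) (Fin m) (FF K)) (hA : Nondegenerate A)
    (μ : Measure (Fin n → FF K))
    (hinv : ∀ a : Fin n → FF K, ∀ s : Set (Fin n → FF K), MeasurableSet s →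
      μ ((fun θ => a + θ) ⁻¹' s) = μ s)
    (hone : μ {θ : Fin n → FF K | ∀ i, fnorm (θ i) < 1} = 1) :
    ∀ᵐ θ ∂μ, omegaInhom A θ = (omegaHatHom A.transpose)⁻¹ ∧
      omegaHatInhom A θ = (omegaHom A.transpose)⁻¹ := by
  filter_upwards [upper1 A μ hinv hone, upper2 A μ hinv hone] with θ h1 h2
  exact ⟨le_antisymm h1 (lower1 A θ), le_antisymm h2 (lower2 A θ)⟩
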